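/- arXiv:1709.10006 — 6 statements merged into one kernel-verified Lean document; each statement's English description precedes it below -/
import Mathlib

section
/- (Expander mixing lemma for multisets.) Let G be a d-regular simple graph on n vertices with λ(G) ≤ λ. Let v, w : V(G) → ℝ≥0 be weight functions (multiplicities), and set |V| = Σₓ v(x), |W| = Σᵧ w(y) and e(V, W) = Σ_{x,y adjacent in G} v(x)·w(y). Then |e(V, W) − (d/n)|V||W|| ≤ λ·√((Σₓ v(x)² − |V|²/n)·(Σᵧ w(y)² − |W|²/n)). -/
open scoped Matrix

/-- The Euclidean (ℓ²) norm of a finitely-supported real vector. -/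
noncomputable def l2norm {α : Type*} [Fintype α] (v : α → ℝ) : ℝ :=
  Real.sqrt (∑ x, v x ^ 2)

open Classical in
/-- The (real) adjacency matrix of a graph. -/
noncomputable def adjMat {α : Type*} [Fintype α] (G : SimpleGraph α) : Matrix α α ℝ :=
  fun x y => if G.Adj x y then 1 else 0

/-- For a regular graph, `λ(G) ≤ lam` (all eigenvalues other than the largest are
at most `lam` in absolute value) is equivalent to the adjacency operator contracting
by a factor `lam` on the space of mean-zero vectors. -/
def eigBound {α : Type*} [Fintype α] (G : SimpleGraph α) (lam : ℝ) : Prop :=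
  ∀ v : α → ℝ, (∑ x, v x) = 0 → l2norm (adjMat G *ᵥ v) ≤ lam * l2norm v

open Classical in
theorem expander_mixing_multiset {α : Type*} [Fintype α] (G : SimpleGraph α) (d : ℕ)
    (hreg : ∀ x : α, (G.neighborSet x).ncard = d)
    (lam : ℝ) (hlam : eigBound G lam)
    (v w : α → ℝ) (hv : ∀ x, 0 ≤ v x) (hw : ∀ x, 0 ≤ w x) :
    |(∑ x : α, ∑ y : α, if G.Adj x y then v x * w y else 0) -
        (d / Fintype.card α) * (∑ x, v x) * (∑ y, w y)| ≤
      lam * Real.sqrt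
        ((∑ x, v x ^ 2 - (∑ x, v x) ^ 2 / Fintype.card α) *
          (∑ y, w y ^ 2 - (∑ y, w y) ^ 2 / Fintype.card α)) := by
  rcases isEmpty_or_nonempty α with hE | hE
  · simp
  have hn : (Fintype.card α : ℝ) ≠ 0 := by
    exact_mod_cast Fintype.card_ne_zero
  have hrow : ∀ x, ∑ y, adjMat G x y = (d : ℝ) := by
    intro x
    rw [← hreg x]
    simp only [adjMat, Finset.sum_boole]
    rw [Set.ncard_eq_toFinset_card']
    congr 2
    ext y
    simp
  have hsym : ∀ x y, adjMat G x y = adjMat G y x := by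
    intro x y
    simp [adjMat, G.adj_comm]
  have he : (∑ x : α, ∑ y : α, if G.Adj x y then v x * w y else 0)
      = ∑ x, v x * ∑ y, adjMat G x y * w y := by
    refine Finset.sum_congr rfl fun x _ => ?_
    rw [Finset.mul_sum]
    refine Finset.sum_congr rfl fun y _ => ?_
    simp only [adjMat]
    split_ifs <;> simp
  have hcol : ∑ x, ∑ y, adjMat G x y * w y = d * ∑ y, w y := by
    rw [Finset.sum_comm, Finset.mul_sum]
    refine Finset.sum_congr rfl fun y _ => ?_
    rw [← Finset.sum_mul, ← hrow y]
    congr 1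
    exact Finset.sum_congr rfl fun x _ => hsym x y
  rw [he]
  have hvar : ∀ u : α → ℝ, ∑ x, (u x - (∑ x, u x) / Fintype.card α) ^ 2
      = ∑ x, u x ^ 2 - (∑ x, u x) ^ 2 / Fintype.card α := by
    intro u
    simp only [sub_sq, Finset.sum_add_distrib, Finset.sum_sub_distrib, ← Finset.sum_mul,
      ← Finset.mul_sum, Finset.sum_const, Finset.card_univ, nsmul_eq_mul]
    field_simp
    ring
  rw [← hvar v, ← hvar w]
  set a := (∑ x, v x) / Fintype.card α with ha
  set b := (∑ x, w x) / Fintype.card α with hb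
  have hA : ∀ x, (adjMat G *ᵥ fun y => w y - b) x = (∑ y, adjMat G x y * w y) - d * b := by
    intro x
    simp only [Matrix.mulVec, dotProduct, mul_sub, Finset.sum_sub_distrib, ← Finset.sum_mul, hrow]
  have h0 : ∑ x, (w x - b) = 0 := by
    simp only [Finset.sum_sub_distrib, Finset.sum_const, Finset.card_univ, nsmul_eq_mul, hb]
    field_simp
    ring
  have key : (∑ x, v x * ∑ y, adjMat G x y * w y)
      - (d / Fintype.card α) * (∑ x, v x) * (∑ y, w y)
      = ∑ x, (v x - a) * (adjMat G *ᵥ fun y => w y - b) x := by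
    simp only [hA, sub_mul, mul_sub, Finset.sum_sub_distrib, ← Finset.sum_mul, ← Finset.mul_sum,
      hcol, Finset.sum_const, Finset.card_univ, nsmul_eq_mul]
    rw [ha, hb]
    field_simp
    ring
  rw [key]
  have hc := hlam _ h0
  have hcs : |∑ x, (v x - a) * (adjMat G *ᵥ fun y => w y - b) x|
      ≤ l2norm (fun x => v x - a) * l2norm (adjMat G *ᵥ fun y => w y - b) := by
    rw [l2norm, l2norm, ← Real.sqrt_mul (Finset.sum_nonneg fun _ _ => sq_nonneg _)]
    exact Real.abs_le_sqrt (Finset.sum_mul_sq_le_sq_mul_sq _ _ _)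
  refine hcs.trans ((mul_le_mul_of_nonneg_left hc (Real.sqrt_nonneg _)).trans_eq ?_)
  rw [Real.sqrt_mul (Finset.sum_nonneg fun _ _ => sq_nonneg _)]
  simp only [l2norm]
  ring
end

section
/- (de Caen's inequality.) For any simple graph with n ≥ 2 vertices, m edges and vertex degrees d₁, d₂, …, dₙ, one has Σᵢ dᵢ² ≤ m·(2m/(n − 1) + n − 2). -/
lemma deCaen_arith (N d S e M : ℝ) (hd0 : 0 ≤ d) (hd1 : 0 ≤ d * (d - 1)) (hdN : d ≤ N)
    (hNd : 0 ≤ (N - d) * (N - d - 1)) (he0 : 0 ≤ e) (he : e ≤ d * (N - d))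
    (hS : S ≤ d ^ 2 + e) (hM : d + S + e ≤ M) :
    N * d ^ 2 + N * S ≤ d * M + d * N * (N - 1) := by
  have h1 : d * (d + S + e) ≤ d * M := mul_le_mul_of_nonneg_left hM hd0
  have h2 : (N - d) * S ≤ (N - d) * (d ^ 2 + e) :=
    mul_le_mul_of_nonneg_left hS (by linarith)
  have h3 : e * (N - 2 * d) ≤ d * ((d + N ^ 2 - N - N * d) - d * (N - d)) := by
    rcases le_total 0 (N - 2 * d) with h | h
    · have := mul_le_mul_of_nonneg_right he h
      have h5 : 0 ≤ (d * (d - 1)) * (N - d) := mul_nonneg hd1 (by linarith)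
      nlinarith
    · have := mul_nonneg he0 (neg_nonneg.2 h)
      have h5 := mul_nonneg hd0 hNd
      nlinarith
  nlinarith

lemma deCaen_local {α : Type*} [Fintype α] [DecidableEq α] (G : SimpleGraph α)
    [DecidableRel G.Adj] (v : α) :
    ((Fintype.card α : ℝ) - 1) * (G.degree v : ℝ) ^ 2
      + ((Fintype.card α : ℝ) - 1) * ∑ y ∈ G.neighborFinset v, (G.degree y : ℝ)
    ≤ (G.degree v : ℝ) * (∑ z, (G.degree z : ℝ))
      + (G.degree v : ℝ) * ((Fintype.card α : ℝ) - 1) * ((Fintype.card α : ℝ) - 1 - 1) := by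
  classical
  set A := G.neighborFinset v with hA
  set R := (Finset.univ \ insert v A) with hR
  have hvA : v ∉ A := by simp [hA]
  have split : ∀ g : α → ℝ, ∑ z, g z = g v + ∑ z ∈ A, g z + ∑ z ∈ R, g z := by
    intro g
    rw [← Finset.sum_sdiff (Finset.subset_univ (insert v A)), Finset.sum_insert hvA]
    ring
  let f : α → α → ℝ := fun y z => if G.Adj y z then 1 else 0
  have f0 : ∀ y z, 0 ≤ f y z := fun y z => by simp only [f]; split_ifs <;> norm_num
  have f1 : ∀ y z, f y z ≤ 1 := fun y z => by simp only [f]; split_ifs <;> norm_num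
  have fs : ∀ y z, f y z = f z y := fun y z => by simp only [f, G.adj_comm]
  have hdeg : ∀ y, (G.degree y : ℝ) = ∑ z, f y z := by
    intro y
    simp only [f, Finset.sum_boole, ← G.card_neighborFinset_eq_degree, G.neighborFinset_eq_filter]
  have hAc : (A.card : ℝ) = G.degree v := by simp [hA]
  have hRc : (R.card : ℝ) = (Fintype.card α : ℝ) - 1 - G.degree v := by
    have := split (fun _ => 1)
    simp only [Finset.sum_const, nsmul_eq_mul, mul_one, Finset.card_univ, hAc] at this
    linarith
  have hRn : (Fintype.card α : ℝ) - 1 - G.degree v = ((R.card : ℕ) : ℝ) := hRc.symm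
  have nn : ∀ k : ℕ, (0:ℝ) ≤ (k:ℝ) * ((k:ℝ) - 1) := by
    intro k
    rcases Nat.eq_zero_or_pos k with h | h
    · simp [h]
    · have : (1:ℝ) ≤ k := by exact_mod_cast h
      exact mul_nonneg (by linarith) (by linarith)
  apply deCaen_arith _ _ _ (∑ y ∈ A, ∑ z ∈ R, f y z) _ (Nat.cast_nonneg _) (nn _)
  · have : (0:ℝ) ≤ R.card := Nat.cast_nonneg _
    linarith
  · rw [hRn]; exact nn _
  · exact Finset.sum_nonneg fun y _ => Finset.sum_nonneg fun z _ => f0 y z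
  · rw [← hRc, ← hAc]
    calc _ ≤ ∑ y ∈ A, ∑ z ∈ R, (1:ℝ) :=
          Finset.sum_le_sum fun y _ => Finset.sum_le_sum fun z _ => f1 y z
      _ = _ := by simp
  · have : ∀ y ∈ A, (G.degree y : ℝ) ≤ G.degree v + ∑ z ∈ R, f y z := by
      intro y hy
      rw [hdeg y, split, ← hAc, ← Finset.add_sum_erase A _ hy]
      have h1 : ∑ z ∈ A.erase y, f y z ≤ (A.card : ℝ) - 1 := by
        calc _ ≤ ∑ z ∈ A.erase y, (1:ℝ) := Finset.sum_le_sum fun z _ => f1 y z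
          _ = _ := by
            simp only [Finset.sum_const, nsmul_eq_mul, mul_one]
            rw [← Finset.card_erase_add_one hy]; push_cast; ring
      have h2 : f y y = 0 := by simp [f]
      have := f1 y v
      linarith
    calc _ ≤ _ := Finset.sum_le_sum this
      _ = _ := by
        rw [Finset.sum_add_distrib, Finset.sum_const, nsmul_eq_mul, hAc]; ring
  · rw [split (fun z => (G.degree z : ℝ))]
    have : ∑ y ∈ A, ∑ z ∈ R, f y z ≤ ∑ z ∈ R, (G.degree z : ℝ) := by
      rw [Finset.sum_comm]
      refine Finset.sum_le_sum fun z _ => ?_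
      rw [hdeg z]
      calc _ = ∑ y ∈ A, f z y := Finset.sum_congr rfl fun y _ => fs y z
        _ ≤ _ := Finset.sum_le_sum_of_subset_of_nonneg (Finset.subset_univ _)
            fun y _ _ => f0 z y
    linarith

theorem deCaen {α : Type*} [Fintype α] (G : SimpleGraph α) (hn : 2 ≤ Fintype.card α) :
    (∑ x : α, ((G.neighborSet x).ncard : ℝ) ^ 2) ≤
      (G.edgeSet.ncard : ℝ) *
        (2 * G.edgeSet.ncard / (Fintype.card α - 1) + Fintype.card α - 2) := by
  classical
  have h1 : ∀ x, (G.neighborSet x).ncard = G.degree x := by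
    intro x
    rw [← G.card_neighborFinset_eq_degree, Set.ncard_eq_toFinset_card']
    rfl
  have h2 : G.edgeSet.ncard = G.edgeFinset.card := by
    rw [Set.ncard_eq_toFinset_card']
    rfl
  have h3 : (∑ z, (G.degree z : ℝ)) = 2 * (G.edgeFinset.card : ℝ) := by
    exact_mod_cast G.sum_degrees_eq_twice_card_edges
  have h4 : ∑ v, ∑ y ∈ G.neighborFinset v, (G.degree y : ℝ) = ∑ v, (G.degree v : ℝ) ^ 2 := by
    rw [Finset.sum_comm' (t' := Finset.univ) (s' := fun y => G.neighborFinset y)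
      (by intro x y; simp [G.adj_comm])]
    refine Finset.sum_congr rfl fun y _ => ?_
    simp [sq]
  have h5 := Finset.sum_le_sum fun v (_ : v ∈ Finset.univ) => deCaen_local G v
  simp only [Finset.sum_add_distrib, ← Finset.mul_sum, ← Finset.sum_mul, h3, h4] at h5
  simp only [h1, h2]
  have hN : (0:ℝ) < (Fintype.card α : ℝ) - 1 := by
    have : (2:ℝ) ≤ Fintype.card α := by exact_mod_cast hn
    linarith
  refine le_of_mul_le_mul_left ?_ hN
  have h6 : ((Fintype.card α : ℝ) - 1) * ((G.edgeFinset.card : ℝ) *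
        (2 * G.edgeFinset.card / ((Fintype.card α : ℝ) - 1) + Fintype.card α - 2))
      = (G.edgeFinset.card : ℝ) * (2 * G.edgeFinset.card
        + ((Fintype.card α : ℝ) - 1) * (Fintype.card α - 2)) := by
    field_simp
    ring
  rw [h6]
  linarith
end

section
/- Let G be a D-regular simple graph on N vertices with D ≥ 1, let λ = max_{i ≠ 1} |λᵢ| where λ₁ ≥ λ₂ ≥ … ≥ λ_N are the eigenvalues of the adjacency matrix A of G (so λ₁ = D), and let p₀ : V(G) → [0, 1] be a probability distribution (Σₓ p₀(x) = 1). Define pᵢ = (A/D)ⁱ p₀. Then for every i ∈ ℕ, ‖pᵢ − u‖₂ ≤ (λ/D)ⁱ, where u is the uniform distribution assigning 1/N to every vertex and ‖·‖₂ is the Euclidean norm on ℝ^{V(G)}. -/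
open scoped Matrix

lemma adjMat_isHermitian {α : Type*} [Fintype α] (G : SimpleGraph α) :
    (adjMat G).IsHermitian := by
  unfold Matrix.IsHermitian
  ext x y
  by_cases h : G.Adj x y
  · simp [adjMat, Matrix.conjTranspose_apply, h, h.symm]
  · have h' : ¬ G.Adj y x := fun hyx => h hyx.symm
    simp [adjMat, Matrix.conjTranspose_apply, h, h']

open Classical in
lemma adjMat_row {α : Type*} [Fintype α] (G : SimpleGraph α) (D : ℕ)
    (hreg : ∀ x : α, (G.neighborSet x).ncard = D) (x : α) : ∑ y, adjMat G x y = D := by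
  simp only [adjMat]
  rw [Finset.sum_boole, ← hreg x]
  congr 1
  rw [Set.ncard_eq_toFinset_card']
  congr 1
  ext y
  simp

lemma adjMat_symm {α : Type*} [Fintype α] (G : SimpleGraph α) (x y : α) :
    adjMat G x y = adjMat G y x := by
  have h := G.adj_comm x y
  by_cases h1 : G.Adj x y
  · simp [adjMat, h1, h.mp h1]
  · have h2 : ¬ G.Adj y x := fun h3 => h1 (h.mpr h3)
    simp [adjMat, h1, h2]

lemma adjMat_nonneg {α : Type*} [Fintype α] (G : SimpleGraph α) (x y : α) :
    0 ≤ adjMat G x y := by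
  unfold adjMat; split_ifs <;> norm_num

lemma adjMat_sum {α : Type*} [Fintype α] (G : SimpleGraph α) (D : ℕ)
    (hreg : ∀ x : α, (G.neighborSet x).ncard = D) (v : α → ℝ) :
    ∑ x, (adjMat G *ᵥ v) x = D * ∑ x, v x := by
  simp only [Matrix.mulVec, dotProduct]
  rw [Finset.sum_comm, Finset.mul_sum]
  refine Finset.sum_congr rfl fun y _ => ?_
  rw [← Finset.sum_mul, ← adjMat_row G D hreg y]
  simp only [adjMat_symm G _ y]

lemma adjMat_eig_le {α : Type*} [Fintype α] (G : SimpleGraph α) (D : ℕ)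
    (hreg : ∀ x : α, (G.neighborSet x).ncard = D) (v : α → ℝ) (hv : v ≠ 0) (c : ℝ)
    (h : adjMat G *ᵥ v = c • v) : |c| ≤ D := by
  obtain ⟨z, hz⟩ := Function.ne_iff.mp hv
  obtain ⟨x, -, hx⟩ := Finset.exists_max_image Finset.univ (fun x => |v x|) ⟨z, Finset.mem_univ z⟩
  have hpos : 0 < |v x| := lt_of_lt_of_le (abs_pos.mpr hz) (hx z (Finset.mem_univ z))
  have h1 := congrFun h x
  simp only [Matrix.mulVec, dotProduct, Pi.smul_apply, smul_eq_mul] at h1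
  refine le_of_mul_le_mul_right ?_ hpos
  rw [← abs_mul, ← h1, ← adjMat_row G D hreg x, Finset.sum_mul]
  refine (Finset.abs_sum_le_sum_abs _ _).trans (Finset.sum_le_sum fun y _ => ?_)
  rw [abs_mul, abs_of_nonneg (adjMat_nonneg G x y)]
  exact mul_le_mul_of_nonneg_left (hx y (Finset.mem_univ y)) (adjMat_nonneg G x y)

lemma sq_l2norm {α : Type*} [Fintype α] (v : α → ℝ) :
    l2norm v ^ 2 = ∑ x, v x ^ 2 :=
  Real.sq_sqrt (Finset.sum_nonneg fun _ _ => sq_nonneg _)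

lemma l2norm_nonneg {α : Type*} [Fintype α] (v : α → ℝ) : 0 ≤ l2norm v := Real.sqrt_nonneg _

lemma parseval {α : Type*} [Fintype α] (b : OrthonormalBasis α ℝ (EuclideanSpace ℝ α))
    (v : α → ℝ) : l2norm v ^ 2 = ∑ j, (b j ⬝ᵥ v) ^ 2 := by
  have h := b.sum_sq_norm_inner_right (WithLp.toLp 2 v)
  rw [EuclideanSpace.norm_sq_eq] at h
  rw [sq_l2norm]
  simpa [EuclideanSpace.inner_eq_star_dotProduct, dotProduct_comm] using h.symm

lemma eigBound_of {α : Type*} [Fintype α] [DecidableEq α]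
    (G : SimpleGraph α) (D : ℕ)
    (hreg : ∀ x : α, (G.neighborSet x).ncard = D) (j0 : α) (lam : ℝ) (h0 : 0 ≤ lam)
    (hl : ∀ j, j ≠ j0 → |(adjMat_isHermitian G).eigenvalues j| ≤ lam) : eigBound G lam := by
  intro v hv
  set b := (adjMat_isHermitian G).eigenvectorBasis with hb
  set ν := (adjMat_isHermitian G).eigenvalues with hν
  have hbe : ∀ j, adjMat G *ᵥ (b j).ofLp = ν j • (b j).ofLp := fun j =>
    (adjMat_isHermitian G).mulVec_eigenvectorBasis j
  have hbd : ∀ j, |ν j| ≤ D := fun j => by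
    refine adjMat_eig_le G D hreg _ ?_ _ (hbe j)
    intro h
    exact b.orthonormal.ne_zero j (by ext x; simpa using congrFun h x)
  have hdot : ∀ j (w : α → ℝ), (b j).ofLp ⬝ᵥ (adjMat G *ᵥ w) = ν j * ((b j).ofLp ⬝ᵥ w) := by
    intro j w
    have ht : (adjMat G)ᵀ = adjMat G := by
      ext x y; exact adjMat_symm G y x
    rw [Matrix.dotProduct_mulVec, ← Matrix.mulVec_transpose, ht, hbe, smul_dotProduct, smul_eq_mul]
  have key : ∀ j, (ν j * ((b j).ofLp ⬝ᵥ v)) ^ 2 ≤ lam ^ 2 * ((b j).ofLp ⬝ᵥ v) ^ 2 := by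
    intro j
    have good : |ν j| ≤ lam → (ν j * ((b j).ofLp ⬝ᵥ v)) ^ 2 ≤ lam ^ 2 * ((b j).ofLp ⬝ᵥ v) ^ 2 := by
      intro h
      rw [mul_pow]
      exact mul_le_mul_of_nonneg_right (sq_le_sq.mpr (by rwa [abs_of_nonneg h0])) (sq_nonneg _)
    by_cases hj : j = j0
    · by_cases hD : (D : ℝ) ≤ lam
      · exact good ((hbd j).trans hD)
      · push Not at hD
        subst hj
        have hsum : ∀ k, k ≠ j → ∑ x, (b k).ofLp x = 0 := by
          intro k hk
          have h1 := adjMat_sum G D hreg (b k).ofLp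
          rw [hbe k] at h1
          simp only [Pi.smul_apply, smul_eq_mul, ← Finset.mul_sum] at h1
          have h2 : ν k < D := (le_abs_self _).trans_lt ((hl k hk).trans_lt hD)
          have h3 : ((D : ℝ) - ν k) * ∑ x, (b k).ofLp x = 0 := by linarith
          exact (mul_eq_zero.mp h3).resolve_left (by linarith)
        have hexp := b.sum_inner_mul_inner (WithLp.toLp 2 (fun _ => (1 : ℝ))) (WithLp.toLp 2 v)
        have hexp1 := b.sum_sq_norm_inner_right (WithLp.toLp 2 (fun _ => (1 : ℝ)))
        rw [EuclideanSpace.norm_sq_eq] at hexp1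
        simp only [EuclideanSpace.inner_eq_star_dotProduct] at hexp hexp1
        simp [dotProduct, hv] at hexp hexp1
        rw [Finset.sum_eq_single j (fun k _ hk => by simp [hsum k hk]) (by simp)] at hexp hexp1
        have hc : (0 : ℝ) < Fintype.card α := by
          exact_mod_cast Fintype.card_pos_iff.mpr ⟨j⟩
        have hne : ∑ x, (b j).ofLp x ≠ 0 := by
          intro h; rw [h] at hexp1; simp at hexp1; simp [← hexp1] at hc
        have hz : (b j).ofLp ⬝ᵥ v = 0 := by
          have := (mul_eq_zero.mp hexp).resolve_left hne
          rw [dotProduct, ← this]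
          exact Finset.sum_congr rfl fun _ _ => mul_comm _ _
        simp [hz]
    · exact good (hl j hj)
  refine le_of_sq_le_sq ?_ (mul_nonneg h0 (l2norm_nonneg v))
  rw [mul_pow, parseval b, parseval b, Finset.mul_sum]
  refine Finset.sum_le_sum fun j _ => ?_
  rw [hdot]
  exact key j

theorem random_walk_mixing {α : Type*} [Fintype α] [DecidableEq α]
    (G : SimpleGraph α) (D : ℕ) (hD : 1 ≤ D)
    (hreg : ∀ x : α, (G.neighborSet x).ncard = D)
    (μ : Fin (Fintype.card α) → ℝ) (hmono : Antitone μ)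
    (e : Fin (Fintype.card α) ≃ α)
    (heig : ∀ i, μ i = (adjMat_isHermitian G).eigenvalues (e i))
    (lam : ℝ) (hlam : IsGreatest {x : ℝ | ∃ i : Fin (Fintype.card α), (i : ℕ) ≠ 0 ∧ x = |μ i|} lam)
    (p₀ : α → ℝ) (hp0 : ∀ x, 0 ≤ p₀ x) (hp1 : (∑ x, p₀ x) = 1) :
    ∀ i : ℕ,
      l2norm ((((D : ℝ)⁻¹ • adjMat G) ^ i) *ᵥ p₀ - fun _ => (Fintype.card α : ℝ)⁻¹) ≤
        (lam / D) ^ i := by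
  have hD0 : (D : ℝ) ≠ 0 := by
    have : D ≠ 0 := by omega
    exact_mod_cast this
  have hne : Nonempty α := by
    by_contra h
    rw [not_nonempty_iff] at h
    simp at hp1
  have hcp : 0 < Fintype.card α := Fintype.card_pos
  have hN : (Fintype.card α : ℝ) ≠ 0 := by exact_mod_cast hcp.ne'
  have hl0 : 0 ≤ lam := by
    obtain ⟨i, -, h⟩ := hlam.1
    rw [h]; exact abs_nonneg _
  have hE : eigBound G lam := by
    refine eigBound_of G D hreg (e ⟨0, hcp⟩) lam hl0 fun j hj => ?_
    refine hlam.2 ⟨e.symm j, fun h => hj ?_, ?_⟩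
    · rw [← e.apply_symm_apply j]
      congr 1
      exact Fin.ext h
    · rw [heig, e.apply_symm_apply]
  have hs : ∀ i : ℕ, ∑ x, ((((D : ℝ)⁻¹ • adjMat G) ^ i) *ᵥ p₀) x = 1 := by
    intro i
    induction i with
    | zero => simpa using hp1
    | succ n ih =>
      rw [pow_succ', ← Matrix.mulVec_mulVec, Matrix.smul_mulVec]
      simp only [Pi.smul_apply, smul_eq_mul]
      rw [← Finset.mul_sum, adjMat_sum G D hreg, ih]
      field_simp
  intro i
  induction i with
  | zero =>
    simp only [pow_zero, Matrix.one_mulVec]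
    refine Real.sqrt_le_one.mpr ?_
    simp only [Pi.sub_apply, sub_sq, Finset.sum_add_distrib, Finset.sum_sub_distrib]
    rw [← Finset.sum_mul, ← Finset.mul_sum, hp1]
    have h1 : ∑ x, p₀ x ^ 2 ≤ 1 := by
      rw [← hp1]
      refine Finset.sum_le_sum fun x _ => ?_
      have : p₀ x ≤ 1 := by
        rw [← hp1]
        exact Finset.single_le_sum (fun y _ => hp0 y) (Finset.mem_univ x)
      nlinarith [hp0 x]
    have h2 : ∑ _x : α, ((Fintype.card α : ℝ)⁻¹) ^ 2 = (Fintype.card α : ℝ)⁻¹ := by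
      simp; field_simp
    have h3 : 0 ≤ (Fintype.card α : ℝ)⁻¹ := by positivity
    rw [h2]; linarith
  | succ n ih =>
    set q := (((D : ℝ)⁻¹ • adjMat G) ^ n) *ᵥ p₀ with hq
    have hu : adjMat G *ᵥ (fun _ => (Fintype.card α : ℝ)⁻¹) =
        fun _ => (D : ℝ) * (Fintype.card α : ℝ)⁻¹ := by
      ext x
      simp only [Matrix.mulVec, dotProduct]
      rw [← Finset.sum_mul, adjMat_row G D hreg]
    have hstep : (((D : ℝ)⁻¹ • adjMat G) ^ (n + 1)) *ᵥ p₀ - (fun _ => (Fintype.card α : ℝ)⁻¹)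
        = (D : ℝ)⁻¹ • (adjMat G *ᵥ (q - fun _ => (Fintype.card α : ℝ)⁻¹)) := by
      rw [pow_succ', ← Matrix.mulVec_mulVec, Matrix.smul_mulVec, Matrix.mulVec_sub, hu, smul_sub]
      congr 1
      ext x
      simp only [Pi.smul_apply, smul_eq_mul]
      field_simp
    have hsm : ∀ w : α → ℝ, l2norm ((D : ℝ)⁻¹ • w) = (D : ℝ)⁻¹ * l2norm w := by
      intro w
      unfold l2norm
      simp only [Pi.smul_apply, smul_eq_mul, mul_pow]
      rw [← Finset.mul_sum, Real.sqrt_mul (by positivity), Real.sqrt_sq (by positivity)]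
    rw [hstep, hsm]
    have hz : ∑ x, (q - fun _ => (Fintype.card α : ℝ)⁻¹ : α → ℝ) x = 0 := by
      simp only [Pi.sub_apply, Finset.sum_sub_distrib]
      rw [hs n]; simp [hN]
    calc _ ≤ (D : ℝ)⁻¹ * (lam * l2norm (q - fun _ => (Fintype.card α : ℝ)⁻¹)) :=
          mul_le_mul_of_nonneg_left (hE _ hz) (by positivity)
      _ ≤ (D : ℝ)⁻¹ * (lam * (lam / D) ^ n) := by gcongr
      _ = _ := by rw [pow_succ]; ring
end

section
/- (Discrete Cheeger inequality, Dodziuk / Alon–Milman.) Let G be a D-regular simple graph on N ≥ 2 vertices with D ≥ 1, and let λ₁ ≥ λ₂ ≥ … ≥ λ_N be the eigenvalues of its adjacency matrix. Then λ₂ ≤ D − h(G)²/(2D), where h(G) = min over all nonempty vertex subsets U with |U| ≤ N/2 of e(U, Uᶜ)/|U|, and e(U, Uᶜ) is the number of edges of G with one endpoint in U and the other in its complement. -/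
open scoped Matrix

open Classical in
/-- The number of edges of `G` with one endpoint in `U` and the other in `Uᶜ`. -/
noncomputable def cutCount {α : Type*} [Fintype α] [DecidableEq α]
    (G : SimpleGraph α) (U : Finset α) : ℕ :=
  ∑ x ∈ U, ∑ y ∈ Uᶜ, if G.Adj x y then 1 else 0

lemma ch_coarea {α : Type*} [Fintype α] [DecidableEq α] (A : α → α → ℝ) (h : ℝ)
    (hU : ∀ U : Finset α, U.Nonempty → 2 * U.card ≤ Fintype.card α →
      h * U.card ≤ ∑ x ∈ U, ∑ y ∈ Uᶜ, A x y) :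
    ∀ (n : ℕ) (F : α → ℝ), (∀ x, 0 ≤ F x) → (Finset.univ.filter (fun x => 0 < F x)).card = n →
      2 * n ≤ Fintype.card α →
      h * ∑ x, F x ≤ ∑ x, ∑ y, A x y * max (F x - F y) 0 := by
  intro n
  induction n using Nat.strong_induction_on with
  | _ n ih =>
  intro F hF hn hN
  set U := Finset.univ.filter (fun x => 0 < F x) with hUdef
  have hmem : ∀ x, x ∈ U ↔ 0 < F x := by intro x; simp [hUdef]
  have hz : ∀ x, x ∉ U → F x = 0 := fun x hx =>
    le_antisymm (not_lt.mp (fun h => hx ((hmem x).2 h))) (hF x)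
  rcases U.eq_empty_or_nonempty with hE | hne
  · have : ∀ x, F x = 0 := fun x => hz x (by simp [hE])
    simp [this]
  · obtain ⟨x0, hx0, hmin⟩ := Finset.exists_min_image U F hne
    set m := F x0 with hm
    have hmpos : 0 < m := (hmem x0).1 hx0
    set F' : α → ℝ := fun x => F x - if x ∈ U then m else 0 with hF'
    have hF'0 : ∀ x, 0 ≤ F' x := by
      intro x
      by_cases hx : x ∈ U
      · simp only [hF', hx, if_true]; linarith [hmin x hx]
      · simp only [hF', hx, if_false]; linarith [hF x]
    have hss : (Finset.univ.filter (fun x => 0 < F' x)) ⊂ U := by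
      rw [Finset.ssubset_iff_of_subset]
      · refine ⟨x0, hx0, ?_⟩
        simp [hF', hx0, hm]
      · intro x hx
        by_contra hxU
        have : 0 < F' x := by simpa using hx
        simp only [hF', hxU, if_false, hz x hxU] at this
        linarith
    have hlt := Finset.card_lt_card hss
    have := ih _ (by omega) F' hF'0 rfl (by omega)
    have h1 : ∑ x, F x = ∑ x, F' x + m * U.card := by
      simp only [hF', Finset.sum_sub_distrib, Finset.sum_ite_mem, Finset.univ_inter,
        Finset.sum_const, nsmul_eq_mul]
      ring
    have h2 : ∑ x, ∑ y, A x y * max (F x - F y) 0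
        = ∑ x, ∑ y, A x y * max (F' x - F' y) 0 + m * ∑ x ∈ U, ∑ y ∈ Uᶜ, A x y := by
      have h3 : ∑ x ∈ U, ∑ y ∈ Uᶜ, A x y
          = ∑ x, ∑ y, if x ∈ U then (if y ∈ Uᶜ then A x y else 0) else 0 := by
        rw [← Finset.univ_inter U, ← Finset.sum_ite_mem]
        refine Finset.sum_congr rfl fun x _ => ?_
        by_cases hx : x ∈ U
        · simp only [hx, if_true, Finset.univ_inter]
          rw [Finset.sum_ite_mem, Finset.univ_inter]
        · simp [hx]
      rw [h3, Finset.mul_sum, ← Finset.sum_add_distrib]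
      refine Finset.sum_congr rfl fun x _ => ?_
      rw [Finset.mul_sum, ← Finset.sum_add_distrib]
      refine Finset.sum_congr rfl fun y _ => ?_
      by_cases hx : x ∈ U <;> by_cases hy : y ∈ U
      · simp [hF', hx, hy]
      · have := hmin x hx
        simp only [hF', hx, hy, hz y hy, Finset.mem_compl, if_true, if_false, not_false_eq_true]
        rw [max_eq_left (by linarith), max_eq_left (by linarith)]; ring
      · have := hmin y hy
        simp only [hF', hx, hy, hz x hx, Finset.mem_compl, if_true, if_false]
        rw [max_eq_right (by linarith), max_eq_right (by linarith)]; ring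
      · simp [hF', hx, hy]
    have h4 := hU U hne (by omega)
    rw [h1, h2]
    nlinarith [mul_le_mul_of_nonneg_left h4 hmpos.le]

lemma ch_part {α : Type*} [Fintype α] [DecidableEq α] (A : α → α → ℝ) (h D : ℝ) (hD : 0 < D)
    (h0 : 0 ≤ h) (hA0 : ∀ x y, 0 ≤ A x y) (hs : ∀ x y, A x y = A y x)
    (hr : ∀ x, ∑ y, A x y = D)
    (hU : ∀ U : Finset α, U.Nonempty → 2 * U.card ≤ Fintype.card α →
      h * U.card ≤ ∑ x ∈ U, ∑ y ∈ Uᶜ, A x y)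
    (f : α → ℝ) (hf : ∀ x, 0 ≤ f x)
    (hc : 2 * (Finset.univ.filter (fun x => 0 < f x)).card ≤ Fintype.card α) :
    h ^ 2 * ∑ x, f x ^ 2 ≤ D * ∑ x, ∑ y, A x y * (f x - f y) ^ 2 := by
  have hpos : ∀ x, 0 < f x ^ 2 ↔ 0 < f x := fun x =>
    ⟨fun h => lt_of_le_of_ne (hf x) (fun h' => by simp [← h'] at h), fun h => by positivity⟩
  have h1 := ch_coarea A h hU _ (fun x => f x ^ 2) (fun x => sq_nonneg _) rfl
    (by simpa only [hpos] using hc)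
  have hrow : ∀ u : α → ℝ, ∑ x, ∑ y, A x y * u x = D * ∑ x, u x := by
    intro u
    rw [Finset.mul_sum]
    refine Finset.sum_congr rfl fun x _ => ?_
    rw [← Finset.sum_mul, hr]
  have hcol : ∀ u : α → ℝ, ∑ x, ∑ y, A x y * u y = D * ∑ x, u x := by
    intro u
    rw [Finset.sum_comm, ← hrow u]
    refine Finset.sum_congr rfl fun x _ => Finset.sum_congr rfl fun y _ => ?_
    rw [hs]
  have h2 : 2 * ∑ x, ∑ y, A x y * max (f x ^ 2 - f y ^ 2) 0
      = ∑ x, ∑ y, A x y * |f x ^ 2 - f y ^ 2| := by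
    rw [two_mul]
    nth_rewrite 2 [Finset.sum_comm]
    rw [← Finset.sum_add_distrib]
    refine Finset.sum_congr rfl fun x _ => ?_
    rw [← Finset.sum_add_distrib]
    refine Finset.sum_congr rfl fun y _ => ?_
    rw [hs y x]
    rcases le_total (f x ^ 2) (f y ^ 2) with hxy | hxy
    · rw [max_eq_right (by linarith), max_eq_left (by linarith), abs_of_nonpos (by linarith)]; ring
    · rw [max_eq_left (by linarith), max_eq_right (by linarith), abs_of_nonneg (by linarith)]; ring
  have hCS : (∑ x, ∑ y, A x y * |f x ^ 2 - f y ^ 2|) ^ 2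
      ≤ (∑ x, ∑ y, A x y * (f x - f y) ^ 2) * (∑ x, ∑ y, A x y * (f x + f y) ^ 2) := by
    simp only [← Fintype.sum_prod_type']
    apply Finset.sum_sq_le_sum_mul_sum_of_sq_le_mul
    · intro i _; exact mul_nonneg (hA0 _ _) (sq_nonneg _)
    · intro i _; exact mul_nonneg (hA0 _ _) (sq_nonneg _)
    · intro i _; rw [mul_pow, sq_abs]; exact le_of_eq (by ring)
  have hsum : ∑ x, ∑ y, A x y * (f x + f y) ^ 2 ≤ 4 * D * ∑ x, f x ^ 2 := by
    calc _ ≤ ∑ x, ∑ y, (A x y * (2 * f x ^ 2) + A x y * (2 * f y ^ 2)) := by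
          refine Finset.sum_le_sum fun x _ => Finset.sum_le_sum fun y _ => ?_
          rw [← mul_add]
          exact mul_le_mul_of_nonneg_left (by nlinarith [sq_nonneg (f x - f y)]) (hA0 _ _)
      _ = _ := by
          simp only [Finset.sum_add_distrib]
          rw [hrow (fun x => 2 * f x ^ 2), hcol (fun x => 2 * f x ^ 2), ← Finset.mul_sum]
          ring
  have hE : 0 ≤ ∑ x, ∑ y, A x y * (f x - f y) ^ 2 :=
    Finset.sum_nonneg fun x _ => Finset.sum_nonneg fun y _ => mul_nonneg (hA0 _ _) (sq_nonneg _)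
  have hS : 0 ≤ ∑ x, f x ^ 2 := Finset.sum_nonneg fun x _ => sq_nonneg _
  generalize (∑ x, ∑ y, A x y * (f x - f y) ^ 2) = E at *
  generalize (∑ x, ∑ y, A x y * (f x + f y) ^ 2) = P at *
  generalize (∑ x, ∑ y, A x y * |f x ^ 2 - f y ^ 2|) = Q at *
  generalize (∑ x, ∑ y, A x y * max (f x ^ 2 - f y ^ 2) 0) = R at *
  generalize (∑ x, f x ^ 2) = S at *
  rcases hS.eq_or_lt with h' | h'
  · rw [← h']; simp; positivity
  · have a1 : (2 * (h * S)) ^ 2 ≤ Q ^ 2 := pow_le_pow_left₀ (by positivity) (by linarith) 2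
    have a2 : E * P ≤ E * (4 * D * S) := mul_le_mul_of_nonneg_left hsum hE
    have a3 : (h ^ 2 * S) * (4 * S) ≤ (D * E) * (4 * S) := by nlinarith
    exact le_of_mul_le_mul_right a3 (by positivity)

lemma ch_median {α : Type*} [Fintype α] [DecidableEq α] [Nonempty α] (g : α → ℝ) :
    ∃ c : ℝ, 2 * (Finset.univ.filter (fun x => c < g x)).card ≤ Fintype.card α ∧
      2 * (Finset.univ.filter (fun x => g x < c)).card ≤ Fintype.card α := by
  obtain ⟨M, -, hM⟩ := Finset.exists_max_image Finset.univ g Finset.univ_nonempty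
  set T := Finset.univ.filter
    (fun z => 2 * (Finset.univ.filter (fun x => g z < g x)).card ≤ Fintype.card α) with hT
  have hTne : T.Nonempty := by
    refine ⟨M, ?_⟩
    have : Finset.univ.filter (fun x => g M < g x) = ∅ := by
      ext x; simpa using hM x (Finset.mem_univ x)
    simp [hT, this]
  obtain ⟨z, hz, hmin⟩ := Finset.exists_min_image T g hTne
  refine ⟨g z, by simpa [hT] using hz, ?_⟩
  rcases (Finset.univ.filter (fun x => g x < g z)).eq_empty_or_nonempty with h | h
  · simp [h]
  · obtain ⟨w, hw, hmax⟩ := Finset.exists_max_image _ g h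
    have hwz : g w < g z := by simpa using hw
    have hwT : w ∉ T := fun h => absurd (hmin w h) (not_le.mpr hwz)
    have h1 : Fintype.card α < 2 * (Finset.univ.filter (fun x => g w < g x)).card := by
      simpa [hT] using hwT
    have hd : Disjoint (Finset.univ.filter (fun x => g w < g x))
        (Finset.univ.filter (fun x => g x < g z)) := by
      rw [Finset.disjoint_left]
      intro x hx hx'
      have := hmax x hx'
      have : g w < g x := by simpa using hx
      linarith
    have := Finset.card_le_univ (Finset.disjUnion _ _ hd)
    rw [Finset.card_disjUnion] at this
    omega

lemma ch_main {α : Type*} [Fintype α] [DecidableEq α] [Nonempty α]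
    (A : α → α → ℝ) (h D : ℝ) (hD : 0 < D)
    (h0 : 0 ≤ h) (hA0 : ∀ x y, 0 ≤ A x y) (hs : ∀ x y, A x y = A y x)
    (hr : ∀ x, ∑ y, A x y = D)
    (hU : ∀ U : Finset α, U.Nonempty → 2 * U.card ≤ Fintype.card α →
      h * U.card ≤ ∑ x ∈ U, ∑ y ∈ Uᶜ, A x y)
    (g : α → ℝ) (hg : ∑ x, g x = 0) :
    ∑ x, ∑ y, A x y * (g x * g y) ≤ (D - h ^ 2 / (2 * D)) * ∑ x, g x ^ 2 := by
  obtain ⟨c, hc1, hc2⟩ := ch_median g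
  have p1 := ch_part A h D hD h0 hA0 hs hr hU (fun x => max (g x - c) 0)
    (fun x => le_max_right _ _) (by simpa using hc1)
  have p2 := ch_part A h D hD h0 hA0 hs hr hU (fun x => max (c - g x) 0)
    (fun x => le_max_right _ _) (by simpa using hc2)
  have hrow : ∀ u : α → ℝ, ∑ x, ∑ y, A x y * u x = D * ∑ x, u x := by
    intro u
    rw [Finset.mul_sum]
    refine Finset.sum_congr rfl fun x _ => ?_
    rw [← Finset.sum_mul, hr]
  have hcol : ∀ u : α → ℝ, ∑ x, ∑ y, A x y * u y = D * ∑ x, u x := by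
    intro u
    rw [Finset.sum_comm, ← hrow u]
    refine Finset.sum_congr rfl fun x _ => Finset.sum_congr rfl fun y _ => ?_
    rw [hs]
  have hE : ∑ x, ∑ y, A x y * (g x - g y) ^ 2
      = 2 * D * ∑ x, g x ^ 2 - 2 * ∑ x, ∑ y, A x y * (g x * g y) := by
    calc _ = ∑ x, ∑ y, (A x y * g x ^ 2 + A x y * g y ^ 2 - 2 * (A x y * (g x * g y))) := by
          refine Finset.sum_congr rfl fun x _ => Finset.sum_congr rfl fun y _ => ?_
          ring
      _ = _ := by
          simp only [Finset.sum_add_distrib, Finset.sum_sub_distrib, ← Finset.mul_sum]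
          have e1 := hrow (fun x => g x ^ 2)
          have e2 := hcol (fun x => g x ^ 2)
          rw [e1, e2]
          ring
  have hN : ∑ x, g x ^ 2 ≤ ∑ x, (max (g x - c) 0) ^ 2 + ∑ x, (max (c - g x) 0) ^ 2 := by
    have : ∑ x, (max (g x - c) 0) ^ 2 + ∑ x, (max (c - g x) 0) ^ 2
        = ∑ x, (g x ^ 2 + c ^ 2 - 2 * c * g x) := by
      rw [← Finset.sum_add_distrib]
      refine Finset.sum_congr rfl fun x _ => ?_
      rcases le_total (g x) c with hx | hx
      · rw [max_eq_right (by linarith), max_eq_left (by linarith)]; ring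
      · rw [max_eq_left (by linarith), max_eq_right (by linarith)]; ring
    rw [this, Finset.sum_sub_distrib, Finset.sum_add_distrib, ← Finset.mul_sum, hg]
    have : 0 ≤ ∑ x : α, c ^ 2 := Finset.sum_nonneg fun _ _ => sq_nonneg _
    linarith
  have hEE : ∑ x, ∑ y, A x y * (max (g x - c) 0 - max (g y - c) 0) ^ 2
      + ∑ x, ∑ y, A x y * (max (c - g x) 0 - max (c - g y) 0) ^ 2
      ≤ ∑ x, ∑ y, A x y * (g x - g y) ^ 2 := by
    rw [← Finset.sum_add_distrib]
    refine Finset.sum_le_sum fun x _ => ?_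
    rw [← Finset.sum_add_distrib]
    refine Finset.sum_le_sum fun y _ => ?_
    rw [← mul_add]
    refine mul_le_mul_of_nonneg_left ?_ (hA0 _ _)
    rcases le_total (g x) c with hx | hx <;> rcases le_total (g y) c with hy | hy
    · rw [max_eq_right (by linarith : g x - c ≤ 0), max_eq_right (by linarith : g y - c ≤ 0),
        max_eq_left (by linarith : 0 ≤ c - g x), max_eq_left (by linarith : 0 ≤ c - g y)]
      nlinarith
    · rw [max_eq_right (by linarith : g x - c ≤ 0), max_eq_left (by linarith : 0 ≤ g y - c),
        max_eq_left (by linarith : 0 ≤ c - g x), max_eq_right (by linarith : c - g y ≤ 0)]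
      nlinarith [mul_nonneg (sub_nonneg.2 hx) (sub_nonneg.2 hy)]
    · rw [max_eq_left (by linarith : 0 ≤ g x - c), max_eq_right (by linarith : g y - c ≤ 0),
        max_eq_right (by linarith : c - g x ≤ 0), max_eq_left (by linarith : 0 ≤ c - g y)]
      nlinarith [mul_nonneg (sub_nonneg.2 hx) (sub_nonneg.2 hy)]
    · rw [max_eq_left (by linarith : 0 ≤ g x - c), max_eq_left (by linarith : 0 ≤ g y - c),
        max_eq_right (by linarith : c - g x ≤ 0), max_eq_right (by linarith : c - g y ≤ 0)]
      nlinarith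
  have k1 := mul_le_mul_of_nonneg_left hN (sq_nonneg h)
  have k2 := mul_le_mul_of_nonneg_left hEE hD.le
  have k3 : h ^ 2 * ∑ x, g x ^ 2 ≤ D * (2 * D * ∑ x, g x ^ 2
      - 2 * ∑ x, ∑ y, A x y * (g x * g y)) := by rw [← hE]; linarith
  generalize (∑ x, ∑ y, A x y * (g x * g y)) = X at *
  generalize (∑ x, g x ^ 2) = S at *
  have k4 : h ^ 2 / (2 * D) * S ≤ D * S - X := by
    rw [div_mul_eq_mul_div, div_le_iff₀ (by positivity)]
    linarith
  linarith

theorem cheeger_inequality {α : Type*} [Fintype α] [DecidableEq α]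
    (G : SimpleGraph α) (D : ℕ) (hD : 1 ≤ D) (hN : 2 ≤ Fintype.card α)
    (hreg : ∀ x : α, (G.neighborSet x).ncard = D)
    (μ : Fin (Fintype.card α) → ℝ) (hmono : Antitone μ)
    (e : Fin (Fintype.card α) ≃ α)
    (heig : ∀ i, μ i = (adjMat_isHermitian G).eigenvalues (e i))
    (h : ℝ)
    (hh : IsLeast {r : ℝ | ∃ U : Finset α, U.Nonempty ∧ 2 * U.card ≤ Fintype.card α ∧
            r = (cutCount G U : ℝ) / U.card} h) :
    μ ⟨1, by omega⟩ ≤ D - h ^ 2 / (2 * D) := by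
  classical
  have hne : Nonempty α := Fintype.card_pos_iff.1 (by omega)
  obtain ⟨⟨U0, hU0, hU0', hU0e⟩, hlb⟩ := hh
  have h0 : 0 ≤ h := by rw [hU0e]; positivity
  have hU : ∀ U : Finset α, U.Nonempty → 2 * U.card ≤ Fintype.card α →
      h * U.card ≤ ∑ x ∈ U, ∑ y ∈ Uᶜ, adjMat G x y := by
    intro U hU1 hU2
    have h1 : h ≤ (cutCount G U : ℝ) / U.card := hlb ⟨U, hU1, hU2, rfl⟩
    have hp : (0 : ℝ) < U.card := by exact_mod_cast hU1.card_pos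
    rw [le_div_iff₀ hp] at h1
    refine h1.trans (le_of_eq ?_)
    simp only [cutCount, adjMat]
    push_cast
    rfl
  have hA0 : ∀ x y, 0 ≤ adjMat G x y := by
    intro x y; unfold adjMat; split_ifs <;> norm_num
  have hs : ∀ x y, adjMat G x y = adjMat G y x := by
    intro x y; simp only [adjMat, G.adj_comm]
  have hr : ∀ x, ∑ y, adjMat G x y = (D : ℝ) := by
    intro x
    rw [← hreg x, Set.ncard_eq_toFinset_card']
    simp only [adjMat, Finset.sum_boole]
    congr 2
    ext y; simp
  have hDpos : (0 : ℝ) < D := by exact_mod_cast hD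
  have key := ch_main (adjMat G) h D hDpos h0 hA0 hs hr hU
  set H := adjMat_isHermitian G
  set i0 : Fin (Fintype.card α) := ⟨0, by omega⟩
  set i1 : Fin (Fintype.card α) := ⟨1, by omega⟩
  have h01 : μ i1 ≤ μ i0 := hmono (by simp [i0, i1])
  have hi : e i0 ≠ e i1 := fun h => by
    have := e.injective h
    simp [i0, i1] at this
  set u : α → ℝ := ⇑(H.eigenvectorBasis (e i0)) with hu
  set v : α → ℝ := ⇑(H.eigenvectorBasis (e i1)) with hv
  have hAu : adjMat G *ᵥ u = μ i0 • u := by rw [heig]; exact H.mulVec_eigenvectorBasis (e i0)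
  have hAv : adjMat G *ᵥ v = μ i1 • v := by rw [heig]; exact H.mulVec_eigenvectorBasis (e i1)
  have hon := H.eigenvectorBasis.orthonormal
  rw [orthonormal_iff_ite] at hon
  have huu : ∑ x, u x * u x = 1 := by
    have := hon (e i0) (e i0)
    rw [PiLp.inner_apply, if_pos rfl] at this
    exact this
  have hvv : ∑ x, v x * v x = 1 := by
    have := hon (e i1) (e i1)
    rw [PiLp.inner_apply, if_pos rfl] at this
    exact this
  have huv : ∑ x, u x * v x = 0 := by
    have := hon (e i1) (e i0)
    rw [PiLp.inner_apply, if_neg hi.symm] at this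
    exact this
  obtain ⟨a, b, hab, hsum⟩ : ∃ a b : ℝ, 0 < a ^ 2 + b ^ 2 ∧ a * ∑ x, u x + b * ∑ x, v x = 0 := by
    by_cases hz : ∑ x, u x = 0
    · exact ⟨1, 0, by norm_num, by simp [hz]⟩
    · exact ⟨∑ x, v x, -∑ x, u x, by
        have : 0 < (∑ x, u x) ^ 2 := by positivity
        nlinarith [sq_nonneg (∑ x, v x)], by ring⟩
  have hk := key (fun x => a * u x + b * v x) (by
    rw [Finset.sum_add_distrib, ← Finset.mul_sum, ← Finset.mul_sum, hsum])
  have hnorm : ∑ x, (a * u x + b * v x) ^ 2 = a ^ 2 + b ^ 2 := by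
    calc _ = ∑ x, (a ^ 2 * (u x * u x) + b ^ 2 * (v x * v x) + 2 * a * b * (u x * v x)) :=
          Finset.sum_congr rfl fun x _ => by ring
      _ = _ := by
          simp only [Finset.sum_add_distrib, ← Finset.mul_sum, huu, hvv, huv]; ring
  have hquad : ∑ x, ∑ y, adjMat G x y * ((a * u x + b * v x) * (a * u y + b * v y))
      = a ^ 2 * μ i0 + b ^ 2 * μ i1 := by
    calc _ = ∑ x, (a * u x + b * v x) * (a * (μ i0 * u x) + b * (μ i1 * v x)) := by
          refine Finset.sum_congr rfl fun x _ => ?_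
          have e1 : ∑ y, adjMat G x y * u y = μ i0 * u x := congrFun hAu x
          have e2 : ∑ y, adjMat G x y * v y = μ i1 * v x := congrFun hAv x
          rw [← e1, ← e2, Finset.mul_sum, Finset.mul_sum, ← Finset.sum_add_distrib,
            Finset.mul_sum]
          exact Finset.sum_congr rfl fun y _ => by ring
      _ = ∑ x, (a ^ 2 * μ i0 * (u x * u x) + b ^ 2 * μ i1 * (v x * v x)
            + (a * b * μ i0 + a * b * μ i1) * (u x * v x)) :=
          Finset.sum_congr rfl fun x _ => by ring
      _ = _ := by
          simp only [Finset.sum_add_distrib, ← Finset.mul_sum, huu, hvv, huv]; ring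
  rw [hnorm, hquad] at hk
  refine le_of_mul_le_mul_right (le_trans ?_ hk) hab
  nlinarith [mul_le_mul_of_nonneg_left h01 (sq_nonneg a)]
end

section
/- Let F be a simple graph on a finite vertex set of size d ≥ 2 with m edges. Then the number of 3-element subsets of the vertex set that contain at least one edge of F and at least one pair of vertices that is not an edge of F equals (1/2)·Σ_y deg(y)·(d − 1 − deg(y)), and this quantity is at least (d/2)·m − m²/(d − 1). -/
theorem fiber_card_two {α : Type*} [DecidableEq α] (G : SimpleGraph α)
    (T : Finset (α × α × α)) (hT : ∀ p q r, (p, q, r) ∈ T ↔ G.Adj p q ∧ p ≠ r ∧ ¬ G.Adj p r)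
    (s : Finset α) (hs : s.card = 3) (h1 : ∃ x ∈ s, ∃ y ∈ s, G.Adj x y)
    (h2 : ∃ x ∈ s, ∃ y ∈ s, x ≠ y ∧ ¬ G.Adj x y) :
    (T.filter (fun t => ({t.1, t.2.1, t.2.2} : Finset α) = s)).card = 2 := by
  have key : ∃ y x z, G.Adj y x ∧ y ≠ z ∧ x ≠ z ∧ ¬ G.Adj y z ∧ s = {y, x, z} := by
    obtain ⟨a, b, c, hab, hac, hbc, rfl⟩ := Finset.card_eq_three.1 hs
    have e1 : ({a, b, c} : Finset α) = {a, c, b} := by ext; simp; tauto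
    have e2 : ({a, b, c} : Finset α) = {b, a, c} := by ext; simp; tauto
    have e3 : ({a, b, c} : Finset α) = {b, c, a} := by ext; simp; tauto
    have e4 : ({a, b, c} : Finset α) = {c, a, b} := by ext; simp; tauto
    have e5 : ({a, b, c} : Finset α) = {c, b, a} := by ext; simp; tauto
    have sab := G.adj_comm a b
    have sac := G.adj_comm a c
    have sbc := G.adj_comm b c
    by_cases A : G.Adj a b <;> by_cases B : G.Adj a c <;> by_cases C : G.Adj b c
    · exfalso; simp at h2; grind
    · exact ⟨b, a, c, sab.1 A, hbc, hac, C, e2⟩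
    · exact ⟨a, b, c, A, hac, hbc, B, rfl⟩
    · exact ⟨a, b, c, A, hac, hbc, B, rfl⟩
    · exact ⟨a, c, b, B, hab, hbc.symm, A, e1⟩
    · exact ⟨a, c, b, B, hab, hbc.symm, A, e1⟩
    · exact ⟨b, c, a, C, hab.symm, hac.symm, fun h => A (sab.2 h), e3⟩
    · exfalso; simp at h1; grind [G.irrefl]
  obtain ⟨y, x, z, hyx, hyz, hxz, hn, rfl⟩ := key
  have hne := hyx.ne
  have hxy := hyx.symm
  have hn' : ¬ G.Adj z y := fun h => hn h.symm
  have mem : ∀ p q r : α, ({p, q, r} : Finset α) = {y, x, z} →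
      (p = y ∨ p = x ∨ p = z) ∧ (q = y ∨ q = x ∨ q = z) ∧ (r = y ∨ r = x ∨ r = z) := by
    intro p q r h
    have hp : p ∈ ({p, q, r} : Finset α) := by simp
    have hq : q ∈ ({p, q, r} : Finset α) := by simp
    have hr : r ∈ ({p, q, r} : Finset α) := by simp
    rw [h] at hp hq hr
    simpa using And.intro hp (And.intro hq hr)
  by_cases C : G.Adj x z
  · have C' := C.symm
    have : T.filter (fun t => ({t.1, t.2.1, t.2.2} : Finset α) = {y, x, z}) =
        {(y, x, z), (z, x, y)} := by
      ext ⟨p, q, r⟩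
      simp only [Finset.mem_filter, hT, Finset.mem_insert, Finset.mem_singleton, Prod.mk.injEq]
      constructor
      · rintro ⟨⟨u, v, w⟩, h⟩
        have hqr : q ≠ r := by rintro rfl; exact w u
        have hpq := u.ne
        have := mem p q r h
        grind
      · rintro (⟨rfl, rfl, rfl⟩ | ⟨rfl, rfl, rfl⟩)
        · exact ⟨⟨hyx, hyz, hn⟩, rfl⟩
        · exact ⟨⟨C', hyz.symm, hn'⟩, by ext; simp; tauto⟩
    rw [this, Finset.card_pair]
    simp [hyz]
  · have C' : ¬ G.Adj z x := fun h => C h.symm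
    have : T.filter (fun t => ({t.1, t.2.1, t.2.2} : Finset α) = {y, x, z}) =
        {(y, x, z), (x, y, z)} := by
      ext ⟨p, q, r⟩
      simp only [Finset.mem_filter, hT, Finset.mem_insert, Finset.mem_singleton, Prod.mk.injEq]
      constructor
      · rintro ⟨⟨u, v, w⟩, h⟩
        have hqr : q ≠ r := by rintro rfl; exact w u
        have hpq := u.ne
        have := mem p q r h
        grind
      · rintro (⟨rfl, rfl, rfl⟩ | ⟨rfl, rfl, rfl⟩)
        · exact ⟨⟨hyx, hyz, hn⟩, rfl⟩
        · exact ⟨⟨hxy, hxz, C⟩, by ext; simp; tauto⟩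
    rw [this, Finset.card_pair]
    simp [hne]

theorem de_caen {α : Type*} [Fintype α] [DecidableEq α] (G : SimpleGraph α) [DecidableRel G.Adj]
    (hd : 2 ≤ Fintype.card α) (m : ℕ) (hm : ∑ y, G.degree y = 2 * m) :
    ∑ y, (G.degree y : ℝ) ^ 2 ≤
      ((Fintype.card α : ℝ) - 2) * m + 2 * (m : ℝ) ^ 2 / ((Fintype.card α : ℝ) - 1) := by
  have hmR : ∑ y, (G.degree y : ℝ) = 2 * m := by exact_mod_cast hm
  rcases hd.eq_or_lt with h2 | h3
  · have hdeg : ∀ y, (G.degree y : ℝ) ^ 2 = G.degree y := by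
      intro y
      have := G.degree_lt_card_verts y
      have : G.degree y = 0 ∨ G.degree y = 1 := by omega
      rcases this with h | h <;> simp [h]
    simp only [hdeg, hmR, ← h2]
    have : (m : ℝ) ≤ (m : ℝ) ^ 2 := by exact_mod_cast Nat.le_self_pow (by norm_num) m
    norm_num
    linarith
  · set d : ℝ := (Fintype.card α : ℝ) with hdd
    have hd3 : (3 : ℝ) ≤ d := by rw [hdd]; exact_mod_cast h3
    set r : α → ℝ := fun y => (G.degree y : ℝ) with hr
    set a : α → α → ℝ := fun i j => if G.Adj i j then 1 else 0 with ha
    set c : ℝ := 2 * m / (d - 1) with hc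
    have hrow : ∀ i, ∑ j, a i j = r i := by
      intro i
      simp [ha, hr, ← SimpleGraph.card_neighborFinset_eq_degree, SimpleGraph.neighborFinset_eq_filter]
    have hsymm : ∀ i j, a i j = a j i := by
      intro i j; simp [ha, G.adj_comm]
    have hcol : ∀ j, ∑ i, a i j = r j := by
      intro j; rw [← hrow j]; exact Finset.sum_congr rfl fun i _ => hsymm i j
    have hsq : ∀ i j, a i j ^ 2 = a i j := by
      intro i j; simp [ha]
    have hdiag : ∀ i, a i i = 0 := by intro i; simp [ha]
    set S : ℝ := ∑ y, r y ^ 2 with hS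
    have hsr : ∑ y, r y = 2 * m := hmR
    have hpos : 0 ≤ ∑ i, ∑ j, ((d - 2) * a i j - (r i + r j) + c) ^ 2
        - ∑ i, ((d - 2) * a i i - (r i + r i) + c) ^ 2 := by
      rw [← Finset.sum_sub_distrib]
      refine Finset.sum_nonneg fun i _ => sub_nonneg.2 ?_
      exact Finset.single_le_sum (f := fun j => ((d - 2) * a i j - (r i + r j) + c) ^ 2)
        (fun j _ => sq_nonneg _) (Finset.mem_univ i)
    have e1 : ∑ i, ((d - 2) * a i i - (r i + r i) + c) ^ 2 = 4 * S - 4 * c * (2 * m) + d * c ^ 2 := by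
      rw [← hsr, hS, Finset.mul_sum, Finset.mul_sum, ← Finset.sum_sub_distrib]
      have : d * c ^ 2 = ∑ i : α, c ^ 2 := by simp [hdd]
      rw [this, ← Finset.sum_add_distrib]
      refine Finset.sum_congr rfl fun i _ => ?_
      rw [hdiag]; ring
    have e2 : ∀ i, ∑ j, ((d - 2) * a i j - (r i + r j) + c) ^ 2 =
        ((d - 2) ^ 2 + 2 * (d - 2) * (c - r i)) * r i - 2 * (d - 2) * (∑ j, a i j * r j)
        + d * (c - r i) ^ 2 - 2 * (c - r i) * (2 * m) + S := by
      intro i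
      have : d * (c - r i) ^ 2 = ∑ j : α, (c - r i) ^ 2 := by simp [hdd]
      rw [this]
      conv_rhs => rw [← hsr, hS]
      have h0 := hrow i
      have : ((d - 2) ^ 2 + 2 * (d - 2) * (c - r i)) * r i
        = ((d - 2) ^ 2 + 2 * (d - 2) * (c - r i)) * ∑ j, a i j := by rw [h0]
      rw [this]
      simp only [Finset.mul_sum]
      rw [← Finset.sum_sub_distrib, ← Finset.sum_add_distrib, ← Finset.sum_sub_distrib,
        ← Finset.sum_add_distrib]
      refine Finset.sum_congr rfl fun j _ => ?_
      linear_combination (d - 2) ^ 2 * hsq i j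
    have e3 : ∑ i, ∑ j, a i j * r j = S := by
      rw [Finset.sum_comm, hS]
      refine Finset.sum_congr rfl fun j _ => ?_
      rw [← Finset.sum_mul, hcol]; ring
    have e4 : ∑ i, ∑ j, ((d - 2) * a i j - (r i + r j) + c) ^ 2 =
        (((d - 2) ^ 2 + 2 * (d - 2) * c - 2 * d * c + 4 * m) * (2 * m)
          + (d - 2 * (d - 2)) * S) - 2 * (d - 2) * S + d * (d * c ^ 2 - 4 * c * m + S) := by
      simp only [e2]
      have t : d * (d * c ^ 2 - 4 * c * m + S) = ∑ i : α, (d * c ^ 2 - 4 * c * m + S) := by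
        simp [hdd]; ring
      rw [t]
      conv_rhs => rw [← e3]
      have t2 : ∀ k : ℝ, k * (∑ i, ∑ j, a i j * r j) = ∑ i, k * ∑ j, a i j * r j :=
        fun k => Finset.mul_sum _ _ _
      have t3 : (d - 2 * (d - 2)) * ∑ i, ∑ j, a i j * r j = ∑ i, (d - 2 * (d - 2)) * r i ^ 2 := by
        rw [e3, hS, Finset.mul_sum]
      have t4 : ((d - 2) ^ 2 + 2 * (d - 2) * c - 2 * d * c + 4 * m) * (2 * m) =
        ∑ i, ((d - 2) ^ 2 + 2 * (d - 2) * c - 2 * d * c + 4 * m) * r i := by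
        rw [← hsr, Finset.mul_sum]
      rw [t3, t4, t2, e3, ← Finset.sum_add_distrib, ← Finset.sum_sub_distrib,
        ← Finset.sum_add_distrib]
      refine Finset.sum_congr rfl fun i _ => ?_
      ring
    rw [e1, e4] at hpos
    have hcm : (d - 1) * c = 2 * m := by
      rw [hc]; field_simp [show d - 1 ≠ 0 by linarith]
    have hmc : (m : ℝ) = (d - 1) * c / 2 := by linarith
    have goal' : 2 * (m : ℝ) ^ 2 / (d - 1) = m * c := by rw [hc]; ring
    rw [goal']
    have : 0 ≤ (d - 2) * ((d - 2) * m + m * c - S) := by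
      rw [hmc] at hpos ⊢
      nlinarith [hpos]
    have := nonneg_of_mul_nonneg_right this (by linarith)
    linarith

theorem mixed_triples_count {α : Type*} [Fintype α] (G : SimpleGraph α)
    (hd : 2 ≤ Fintype.card α) :
    (({s : Finset α | s.card = 3 ∧ (∃ x ∈ s, ∃ y ∈ s, G.Adj x y) ∧
          (∃ x ∈ s, ∃ y ∈ s, x ≠ y ∧ ¬ G.Adj x y)}.ncard : ℝ) =
        1 / 2 * ∑ y : α, ((G.neighborSet y).ncard : ℝ) *
          ((Fintype.card α : ℝ) - 1 - (G.neighborSet y).ncard)) ∧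
      ((Fintype.card α : ℝ) / 2) * G.edgeSet.ncard -
          (G.edgeSet.ncard : ℝ) ^ 2 / ((Fintype.card α : ℝ) - 1) ≤
        ({s : Finset α | s.card = 3 ∧ (∃ x ∈ s, ∃ y ∈ s, G.Adj x y) ∧
          (∃ x ∈ s, ∃ y ∈ s, x ≠ y ∧ ¬ G.Adj x y)}.ncard : ℝ) := by
  classical
  have hdeg : ∀ y, (G.neighborSet y).ncard = G.degree y := by
    intro y
    rw [Set.ncard_eq_toFinset_card', ← SimpleGraph.card_neighborFinset_eq_degree]
    rfl
  have hedge : G.edgeSet.ncard = G.edgeFinset.card := by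
    rw [Set.ncard_eq_toFinset_card']
    rfl
  have hmain : (({s : Finset α | s.card = 3 ∧ (∃ x ∈ s, ∃ y ∈ s, G.Adj x y) ∧
          (∃ x ∈ s, ∃ y ∈ s, x ≠ y ∧ ¬ G.Adj x y)}.ncard : ℝ) =
        1 / 2 * ∑ y : α, ((G.neighborSet y).ncard : ℝ) *
          ((Fintype.card α : ℝ) - 1 - (G.neighborSet y).ncard)) := by
    rw [Set.ncard_eq_toFinset_card']
    set N := ({s : Finset α | s.card = 3 ∧ (∃ x ∈ s, ∃ y ∈ s, G.Adj x y) ∧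
          (∃ x ∈ s, ∃ y ∈ s, x ≠ y ∧ ¬ G.Adj x y)}).toFinset with hN
    set T : Finset (α × α × α) :=
      Finset.univ.filter (fun t => G.Adj t.1 t.2.1 ∧ t.1 ≠ t.2.2 ∧ ¬ G.Adj t.1 t.2.2) with hTd
    have hT : ∀ p q r, (p, q, r) ∈ T ↔ G.Adj p q ∧ p ≠ r ∧ ¬ G.Adj p r := by
      intro p q r; simp [hTd]
    have c1 : T.card = N.card * 2 := by
      refine (Finset.card_eq_sum_card_fiberwise (t := N)
        (f := fun t : α × α × α => ({t.1, t.2.1, t.2.2} : Finset α)) ?_).trans ?_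
      · rintro ⟨p, q, r⟩ h
        obtain ⟨u, v, w⟩ := (hT p q r).1 h
        have hqr : q ≠ r := by rintro rfl; exact w u
        simp only [hN, Set.coe_toFinset, Set.mem_setOf_eq]
        exact ⟨Finset.card_eq_three.2 ⟨p, q, r, u.ne, v, hqr, rfl⟩,
          ⟨p, by simp, q, by simp, u⟩, ⟨p, by simp, r, by simp, v, w⟩⟩
      · rw [Finset.sum_const_nat]
        intro s hs
        simp only [hN, Set.mem_toFinset, Set.mem_setOf_eq] at hs
        exact fiber_card_two G T hT s hs.1 hs.2.1 hs.2.2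
    have c2 : T.card = ∑ y, G.degree y * Gᶜ.degree y := by
      refine (Finset.card_eq_sum_card_fiberwise (t := Finset.univ)
        (f := fun t : α × α × α => t.1) (by intro _ _; simp)).trans ?_
      refine Finset.sum_congr rfl fun y _ => ?_
      rw [← SimpleGraph.card_neighborFinset_eq_degree, ← SimpleGraph.card_neighborFinset_eq_degree,
        ← Finset.card_product]
      refine Finset.card_bij' (fun t _ => t.2) (fun p _ => (y, p)) ?_ ?_ ?_ ?_
      · rintro ⟨p, q, r⟩ h
        simp only [Finset.mem_filter, hT] at h
        obtain ⟨h, rfl⟩ := h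
        simpa [SimpleGraph.compl_adj] using h
      · rintro ⟨q, r⟩ h
        simp only [Finset.mem_filter, hT]
        simpa [SimpleGraph.compl_adj] using h
      · rintro ⟨p, q, r⟩ h
        simp only [Finset.mem_filter] at h
        obtain ⟨h, rfl⟩ := h
        rfl
      · intro _ _; rfl
    have c3 : ∑ y : α, ((G.neighborSet y).ncard : ℝ) *
          ((Fintype.card α : ℝ) - 1 - (G.neighborSet y).ncard) = (T.card : ℝ) := by
      rw [c2]; push_cast
      refine Finset.sum_congr rfl fun y _ => ?_
      rw [hdeg]
      have h1 := G.degree_compl y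
      have h2 := G.degree_lt_card_verts y
      have : (Fintype.card α) = Gᶜ.degree y + 1 + G.degree y := by omega
      have : (Fintype.card α : ℝ) = Gᶜ.degree y + 1 + G.degree y := by exact_mod_cast this
      rw [this]; ring
    rw [c3, c1]; push_cast; ring
  refine ⟨hmain, ?_⟩
  rw [hmain, hedge]
  have hm := G.sum_degrees_eq_twice_card_edges
  have key := de_caen G hd _ hm
  have hmR : ∑ y, (G.degree y : ℝ) = 2 * (G.edgeFinset.card : ℝ) := by exact_mod_cast hm
  have : ∑ y : α, ((G.neighborSet y).ncard : ℝ) *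
          ((Fintype.card α : ℝ) - 1 - (G.neighborSet y).ncard) =
      ((Fintype.card α : ℝ) - 1) * (2 * (G.edgeFinset.card : ℝ)) - ∑ y, (G.degree y : ℝ) ^ 2 := by
    rw [← hmR, Finset.mul_sum, ← Finset.sum_sub_distrib]
    refine Finset.sum_congr rfl fun y _ => ?_
    rw [hdeg]; ring
  rw [this]
  rw [mul_div_assoc] at key
  linarith
end

section
/- There exists a constant c > 0 such that every simple graph on d ≥ 3 vertices with at least (3/4)·d(d − 1)/2 edges contains at least c·d³ triangles. -/
open Finset in
theorem tri_aux (n : ℕ) (G : SimpleGraph (Fin n)) [DecidableRel G.Adj] :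
    ((univ.filter (fun p : Fin n × Fin n × Fin n =>
      G.Adj p.1 p.2.1 ∧ G.Adj p.1 p.2.2 ∧ G.Adj p.2.1 p.2.2)).card : ℝ) ≥
      2 * ∑ u, (G.degree u : ℝ) ^ 2 - n * ∑ u, (G.degree u : ℝ) := by
  have hd : ∀ u, (G.degree u : ℝ) = ∑ v, (if G.Adj u v then (1:ℝ) else 0) := by
    intro u
    rw [Finset.sum_boole, ← SimpleGraph.card_neighborFinset_eq_degree,
      SimpleGraph.neighborFinset_eq_filter]
  have h1 : ∑ u, ∑ v, ∑ w, (if G.Adj u v then (1:ℝ) else 0) * (if G.Adj u w then (1:ℝ) else 0)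
      = ∑ u, (G.degree u : ℝ) ^ 2 := by
    refine Finset.sum_congr rfl fun u _ => ?_
    rw [hd, sq, Finset.sum_mul_sum]
  have h2 : ∑ u, ∑ v, ∑ w, (if G.Adj u v then (1:ℝ) else 0) * (if G.Adj v w then (1:ℝ) else 0)
      = ∑ u, (G.degree u : ℝ) ^ 2 := by
    rw [Finset.sum_comm, ← h1]
    simp only [G.adj_comm]
  have h3 : ∑ u, ∑ v, ∑ _w : Fin n, (if G.Adj u v then (1:ℝ) else 0)
      = n * ∑ u, (G.degree u : ℝ) := by
    simp only [hd, Finset.sum_const, Finset.card_univ, Fintype.card_fin, nsmul_eq_mul,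
      Finset.mul_sum]
  rw [← Finset.sum_boole, Fintype.sum_prod_type]
  simp only [Fintype.sum_prod_type]
  rw [two_mul, ← h3]
  nth_rewrite 1 [← h1]
  rw [← h2]
  simp only [← Finset.sum_add_distrib, ← Finset.sum_sub_distrib]
  refine Finset.sum_le_sum fun u _ => Finset.sum_le_sum fun v _ => Finset.sum_le_sum fun w _ => ?_
  by_cases a : G.Adj u v <;> by_cases b : G.Adj u w <;> by_cases c : G.Adj v w <;>
    simp [a, b, c]

open Finset in
theorem tri_count (n : ℕ) (G : SimpleGraph (Fin n)) [DecidableRel G.Adj] :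
    (univ.filter (fun p : Fin n × Fin n × Fin n =>
      G.Adj p.1 p.2.1 ∧ G.Adj p.1 p.2.2 ∧ G.Adj p.2.1 p.2.2)).card ≤
      27 * {s : Finset (Fin n) | s.card = 3 ∧
                ∀ x ∈ s, ∀ y ∈ s, x ≠ y → G.Adj x y}.ncard := by
  classical
  rw [Set.ncard_eq_toFinset_card']
  refine Finset.card_le_mul_card_image_of_maps_to
    (f := fun p : Fin n × Fin n × Fin n => ({p.1, p.2.1, p.2.2} : Finset (Fin n))) ?_ 27 ?_
  · rintro ⟨u, v, w⟩ h
    simp only [Finset.coe_filter, Finset.mem_filter, Finset.mem_univ, true_and, Set.mem_setOf_eq] at h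
    obtain ⟨a, b, c⟩ := h
    simp only [Set.coe_toFinset, Set.mem_toFinset, Set.mem_setOf_eq]
    refine ⟨Finset.card_eq_three.2 ⟨u, v, w, a.ne, b.ne, c.ne, rfl⟩, ?_⟩
    simp [a, b, c, a.symm, b.symm, c.symm]
  · intro s hs
    simp only [Set.mem_toFinset, Set.mem_setOf_eq] at hs
    calc _ ≤ (s ×ˢ s ×ˢ s).card := by
          refine Finset.card_le_card ?_
          rintro ⟨u, v, w⟩ h
          simp only [Finset.mem_filter] at h
          rw [← h.2]
          simp
      _ = 27 := by simp [hs.1]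

theorem supersaturation_triangles :
    ∃ c : ℝ, 0 < c ∧
      ∀ (n : ℕ), 3 ≤ n → ∀ G : SimpleGraph (Fin n),
        (3 / 4 : ℝ) * ((n : ℝ) * ((n : ℝ) - 1) / 2) ≤ (G.edgeSet.ncard : ℝ) →
          c * (n : ℝ) ^ 3 ≤
            ({s : Finset (Fin n) | s.card = 3 ∧
                ∀ x ∈ s, ∀ y ∈ s, x ≠ y → G.Adj x y}.ncard : ℝ) := by
  classical
  refine ⟨1 / 1000, by norm_num, ?_⟩
  intro n hn G hm
  have h1 := tri_aux n G
  have h2 : (_ : ℝ) ≤ _ := Nat.cast_le.2 (tri_count n G)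
  rw [Nat.cast_mul] at h2
  have hE : ∑ u, (G.degree u : ℝ) = 2 * (G.edgeSet.ncard : ℝ) := by
    have := G.sum_degrees_eq_twice_card_edges
    rw [Set.ncard_eq_toFinset_card']
    have h : ((∑ u, G.degree u : ℕ) : ℝ) = ((2 * G.edgeFinset.card : ℕ) : ℝ) := by rw [this]
    push_cast at h
    exact h
  have hcs : (∑ u, (G.degree u : ℝ)) ^ 2 ≤ n * ∑ u, (G.degree u : ℝ) ^ 2 := by
    simpa using sq_sum_le_card_mul_sum_sq (s := Finset.univ) (f := fun u => (G.degree u : ℝ))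
  rw [hE] at h1 hcs
  generalize ∑ u, (G.degree u : ℝ) ^ 2 = Q at *
  generalize Set.ncard {s : Finset (Fin n) | s.card = 3 ∧
                ∀ x ∈ s, ∀ y ∈ s, x ≠ y → G.Adj x y} = T at *
  generalize G.edgeSet.ncard = m at *
  have h3 : 2 * Q - n * (2 * (m:ℝ)) ≤ 27 * T := by
    have := h1.le.trans h2
    exact_mod_cast this
  clear h1 h2 hE
  have hn0 : (0:ℝ) < n := by positivity
  rcases hn.eq_or_lt with rfl | h4
  · have : 3 ≤ m := by
      by_contra hc
      have : (m:ℝ) ≤ 2 := by exact_mod_cast (by omega : m ≤ 2)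
      norm_num at hm
      linarith
    have : (3:ℝ) ≤ m := by exact_mod_cast this
    push_cast at *
    nlinarith
  · have h4 : (4:ℝ) ≤ n := by exact_mod_cast h4
    -- n * 27 T ≥ 2 S^2 - n^2 S
    have h5 : 2 * (2 * (m:ℝ)) ^ 2 - n * (n * (2 * m)) ≤ n * (27 * T) := by
      nlinarith [mul_le_mul_of_nonneg_left h3 hn0.le]
    have hS : (3/4:ℝ) * (n * (n - 1)) ≤ 2 * m := by linarith
    generalize 2 * (m:ℝ) = S at *
    have h6 : (3/4:ℝ) * (n * (n - 1)) * (n * (n - 3) / 2) ≤ S * (2 * S - n * n) := by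
      apply mul_le_mul hS
      · nlinarith
      · apply div_nonneg (mul_nonneg hn0.le (by linarith)) (by norm_num)
      · exact le_trans (by apply mul_nonneg (by norm_num) (mul_nonneg hn0.le (by linarith))) hS
    have h7 : (3/16:ℝ) * n ^ 2 ≤ (n - 1) * (n - 3) := by nlinarith
    have h8 : (n:ℝ) * (9 / 128 * n ^ 3) ≤ n * (27 * T) := by
      have := mul_le_mul_of_nonneg_left h7 (by positivity : (0:ℝ) ≤ 3 / 8 * n ^ 2)
      nlinarith
    have h9 := le_of_mul_le_mul_left h8 hn0
    have : (0:ℝ) ≤ (n:ℝ) ^ 3 := by positivity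
    linarith
end
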